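/- There exists no probability measure ρ on the space of subsets Γ of ℤ² (with the product σ-algebra on {0,1}^{ℤ²}) possessing all of the following properties: (1) ρ satisfies the FKG inequality; (2) with ρ-probability one, either Γ = ∅ or both Γ and ℤ²∖Γ are infinite connected subsets of ℤ², and the latter event has positive ρ-probability; (3) the conditional distribution of Γ given the event {Γ and ℤ²∖Γ are both infinite and connected} is invariant under Γ ↦ Γ + v for every v ∈ ℒ. -/

import Mathlib

open MeasureTheory

noncomputable section

/-- Configurations: subsets `Γ ⊆ ℤ²` encoded as boolean functions (product σ-algebra). -/
abbrev Conf := (ℤ × ℤ) → Bool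

/-- Nearest-neighbor adjacency on `ℤ²`: `x ~ y` iff `‖x - y‖₁ = 1`. -/
def adjZ2 (x y : ℤ × ℤ) : Prop := (x.1 - y.1).natAbs + (x.2 - y.2).natAbs = 1

/-- The subset of `ℤ²` described by the configuration `ω`. -/
def siteSet (ω : Conf) : Set (ℤ × ℤ) := {x | ω x = true}

/-- The complement `ℤ² ∖ Γ`. -/
def coSet (ω : Conf) : Set (ℤ × ℤ) := {x | ω x = false}

/-- `S ⊆ ℤ²` is connected: any two of its points are joined by a nearest-neighbor path
inside `S`. -/
def ConnectedIn (S : Set (ℤ × ℤ)) : Prop :=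
  ∀ x ∈ S, ∀ y ∈ S, Relation.ReflTransGen (fun a b => adjZ2 a b ∧ a ∈ S ∧ b ∈ S) x y

/-- Increasing events of configurations. -/
def IncreasingEvent (A : Set Conf) : Prop :=
  ∀ ⦃ω ω' : Conf⦄, ω ∈ A → (∀ x, ω x ≤ ω' x) → ω' ∈ A

/-- `ρ` satisfies the FKG inequality. -/
def SatisfiesFKG (ρ : Measure Conf) : Prop :=
  ∀ A B : Set Conf, MeasurableSet A → MeasurableSet B →
    IncreasingEvent A → IncreasingEvent B → ρ A * ρ B ≤ ρ (A ∩ B)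

/-- Translation of configurations: `translateConf v ω` describes `Γ_ω + v`. -/
def translateConf (v : ℤ × ℤ) (ω : Conf) : Conf := fun x => ω (x - v)

/-- The event that both `Γ` and `ℤ² ∖ Γ` are infinite connected subsets of `ℤ²`. -/
def GoodEvent : Set Conf :=
  {ω | (siteSet ω).Infinite ∧ ConnectedIn (siteSet ω) ∧
        (coSet ω).Infinite ∧ ConnectedIn (coSet ω)}

/-!
Let `μ` be the law of `Γ` conditioned on `GoodEvent` and `p = ρ GoodEvent`. Intersecting increasing
events with `{Γ ≠ ∅}` shows that `μ` satisfies the FKG inequality up to the factor `p`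
(`setup_cond`); moreover `μ` is invariant under `k ℤ²`, and under `μ` both colours (`true` for `Γ`,
`false` for its complement) occur and are connected. This is contradictory (`Setup.contradiction`).

*Crossings in one direction* (`Setup.cross`). Fix a colour. Near the origin there is a square `Λ_n`
that meets the colour with probability close to one, and hence is joined to every half-plane. Place
the origin at any position of the lattice `k ℤ²` in a large rectangle. By the FKG inequality, at
least one side of the rectangle is reached from `Λ_n` with probability at least `t`. From positions
next to a side, that side is reached (next to the vertical sides: that side, or the top or the
bottom); moving the rectangle up can only help to reach its bottom, by monotonicity of the
events. A discrete Hex-type argument (`exists_opposite_pair`) gives two equal or adjacent positions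
from which opposite sides are reached. Translating one of the two events by the difference of the
positions, using the FKG inequality, and using that all sites of the colour near the origin are
connected to each other near the origin (`Setup.pair`), one obtains a crossing of the rectangle
between opposite sides, with probability bounded below; for horizontal crossings one can also widen
the rectangle by one period.

For the complement the bound can be taken as close to one as desired, with `t` close to one as well,
by the square-root trick (`Setup.thr_false`); for `Γ` it is of order `p` (`Setup.thr_true`).

*Conclusion.* A very elongated rectangle is unlikely to be crossed lengthwise by the complement, as
`Γ` contains a path crossing the strip (`Setup.strip_vert`, `Setup.strip_horiz`). Fix a large height;
for small widths a vertical crossing by the complement is unlikely, for large ones it is very likely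
since a horizontal one is not. At the first width where it is very likely, a horizontal crossing by
the complement is very likely too, by the statement for two consecutive widths. But at that width `Γ`
crosses in one of the two directions with probability of order `p`, and a horizontal and a vertical
crossing of different colours exclude each other (`no_cross`), a contradiction.

The exclusion `no_cross` is proved by a winding number: for a vertical path `γ` and a horizontal path
`γ'` of the other colour, `γ - γ'` never vanishes, while its values on the boundary of the parameter
square would give a loop of winding number one around the origin.
-/

/-! ### Paths and crossings of different colours -/

/-- One nearest-neighbor step between two sites of `R` of colour `b`. -/
def stepIn (ω : Conf) (b : Bool) (R : Set (ℤ × ℤ)) (x y : ℤ × ℤ) : Prop :=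
  adjZ2 x y ∧ (x ∈ R ∧ ω x = b) ∧ (y ∈ R ∧ ω y = b)

/-- `x` and `y` are joined by a path of sites of colour `b` inside `R`. -/
def Conn (ω : Conf) (b : Bool) (R : Set (ℤ × ℤ)) (x y : ℤ × ℤ) : Prop :=
  (x ∈ R ∧ ω x = b) ∧ Relation.ReflTransGen (stepIn ω b R) x y

theorem adjZ2_symm {x y : ℤ × ℤ} (h : adjZ2 x y) : adjZ2 y x := by
  unfold adjZ2 at *; omega

theorem stepIn_symm {ω : Conf} {b : Bool} {R : Set (ℤ × ℤ)} {x y : ℤ × ℤ}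
    (h : stepIn ω b R x y) : stepIn ω b R y x :=
  ⟨adjZ2_symm h.1, h.2.2, h.2.1⟩

theorem Conn.right {ω : Conf} {b : Bool} {R : Set (ℤ × ℤ)} {x y : ℤ × ℤ}
    (h : Conn ω b R x y) : y ∈ R ∧ ω y = b := by
  obtain ⟨hx, h⟩ := h
  cases h with
  | refl => exact hx
  | tail _ h => exact h.2.2

theorem Conn.symm {ω : Conf} {b : Bool} {R : Set (ℤ × ℤ)} {x y : ℤ × ℤ}
    (h : Conn ω b R x y) : Conn ω b R y x :=
  by
  refine ⟨h.right, ?_⟩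
  have h2 := h.2
  clear h
  induction h2 with
  | refl => exact .refl
  | tail _ hst ih => exact .head (stepIn_symm hst) ih

theorem Conn.trans {ω : Conf} {b : Bool} {R : Set (ℤ × ℤ)} {x y z : ℤ × ℤ}
    (h : Conn ω b R x y) (h' : Conn ω b R y z) : Conn ω b R x z :=
  ⟨h.1, h.2.trans h'.2⟩

theorem Conn.mono {ω : Conf} {b : Bool} {R R' : Set (ℤ × ℤ)} {x y : ℤ × ℤ}
    (hR : R ⊆ R') (h : Conn ω b R x y) : Conn ω b R' x y :=
  ⟨⟨hR h.1.1, h.1.2⟩, Relation.ReflTransGen.mono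
    (fun _ _ k => ⟨k.1, ⟨hR k.2.1.1, k.2.1.2⟩, hR k.2.2.1, k.2.2.2⟩) _ _ h.2⟩

/-- A path from a point of `R'` to a point outside `R'` has a first exit from `R'`. -/
theorem Conn.exit {ω : Conf} {b : Bool} {R R' : Set (ℤ × ℤ)} {x y : ℤ × ℤ}
    (h : Conn ω b R x y) (hx : x ∈ R') (hy : y ∉ R') :
    ∃ w w', Conn ω b (R ∩ R') x w ∧ adjZ2 w w' ∧ w' ∈ R ∧ w' ∉ R' := by
  have key : ∀ z, Relation.ReflTransGen (stepIn ω b R) x z →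
      (Conn ω b (R ∩ R') x z ∧ z ∈ R') ∨
        ∃ w w', Conn ω b (R ∩ R') x w ∧ adjZ2 w w' ∧ w' ∈ R ∧ w' ∉ R' := by
    intro z hz
    induction hz with
    | refl => exact Or.inl ⟨⟨⟨⟨h.1.1, hx⟩, h.1.2⟩, .refl⟩, hx⟩
    | @tail u v _ hst ih =>
      rcases ih with ⟨hc, hu⟩ | ih
      · by_cases hv : v ∈ R'
        · exact Or.inl ⟨⟨hc.1, hc.2.tail ⟨hst.1, ⟨⟨hst.2.1.1, hu⟩, hst.2.1.2⟩,
            ⟨hst.2.2.1, hv⟩, hst.2.2.2⟩⟩, hv⟩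
        · exact Or.inr ⟨u, v, hc, hst.1, hst.2.2.1, hv⟩
      · exact Or.inr ih
  rcases key y h.2 with h | h
  · exact absurd h.2 hy
  · exact h

/-- Signed crossing, by the step `u → v`, of the horizontal ray issued from `(1/2, 1/2)` in the
direction `(1, 0)`. The sum over a loop is a winding number; the cell `[0, 1]²` on which the ray
starts has the origin as a corner, so it is not met by the squares avoiding the origin. -/
def crossing (u v : ℤ × ℤ) : ℤ :=
  (if u.2 = 0 ∧ v.2 = 1 ∧ 1 ≤ u.1 then 1 else 0) - (if u.2 = 1 ∧ v.2 = 0 ∧ 1 ≤ u.1 then 1 else 0)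

theorem adjZ2_cases {x y : ℤ × ℤ} (h : adjZ2 x y) :
    (y.1 = x.1 + 1 ∧ y.2 = x.2) ∨ (y.1 = x.1 - 1 ∧ y.2 = x.2) ∨
      (y.1 = x.1 ∧ y.2 = x.2 + 1) ∨ (y.1 = x.1 ∧ y.2 = x.2 - 1) := by
  unfold adjZ2 at h; omega

theorem crossing_horiz {u v : ℤ × ℤ} (h : v.2 = u.2) : crossing u v = 0 := by
  simp only [crossing]
  rw [if_neg (by omega), if_neg (by omega)]; rfl

theorem crossing_up {u v : ℤ × ℤ} (h : v.2 = u.2 + 1) :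
    crossing u v = if u.2 = 0 ∧ 1 ≤ u.1 then 1 else 0 := by
  simp only [crossing]
  split_ifs <;> omega

theorem crossing_down {u v : ℤ × ℤ} (h : v.2 = u.2 - 1) :
    crossing u v = -(if u.2 = 1 ∧ 1 ≤ u.1 then 1 else 0) := by
  simp only [crossing]
  split_ifs <;> omega

/-- The crossing cocycle is closed: a lattice parallelogram whose four corners differ from the
origin has no winding around it. -/
theorem crossing_square {a a' q q' : ℤ × ℤ} (ha : adjZ2 a a') (hq : adjZ2 q q')
    (h1 : a ≠ q) (h2 : a ≠ q') (h3 : a' ≠ q) (h4 : a' ≠ q') :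
    crossing (a - q) (a' - q) + crossing (a' - q) (a' - q') =
      crossing (a - q) (a - q') + crossing (a - q') (a' - q') := by
  have n1 : ¬ (a.1 = q.1 ∧ a.2 = q.2) := fun e => h1 (Prod.ext e.1 e.2)
  have n2 : ¬ (a.1 = q'.1 ∧ a.2 = q'.2) := fun e => h2 (Prod.ext e.1 e.2)
  have n3 : ¬ (a'.1 = q.1 ∧ a'.2 = q.2) := fun e => h3 (Prod.ext e.1 e.2)
  have n4 : ¬ (a'.1 = q'.1 ∧ a'.2 = q'.2) := fun e => h4 (Prod.ext e.1 e.2)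
  have s1 : ∀ x y : ℤ × ℤ, (x - y).1 = x.1 - y.1 := fun _ _ => rfl
  have s2 : ∀ x y : ℤ × ℤ, (x - y).2 = x.2 - y.2 := fun _ _ => rfl
  clear h1 h2 h3 h4
  rcases adjZ2_cases ha with ⟨e1, e2⟩ | ⟨e1, e2⟩ | ⟨e1, e2⟩ | ⟨e1, e2⟩
  all_goals rcases adjZ2_cases hq with ⟨e3, e4⟩ | ⟨e3, e4⟩ | ⟨e3, e4⟩ | ⟨e3, e4⟩
  all_goals
    first
    | rw [crossing_horiz (u := a - q) (v := a' - q) (by rw [s2, s2]; omega),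
        crossing_horiz (u := a - q') (v := a' - q') (by rw [s2, s2]; omega)]
    | rw [crossing_up (u := a - q) (v := a' - q) (by rw [s2, s2]; omega),
        crossing_up (u := a - q') (v := a' - q') (by rw [s2, s2]; omega)]
    | rw [crossing_down (u := a - q) (v := a' - q) (by rw [s2, s2]; omega),
        crossing_down (u := a - q') (v := a' - q') (by rw [s2, s2]; omega)]
  all_goals
    first
    | rw [crossing_horiz (u := a' - q) (v := a' - q') (by rw [s2, s2]; omega),
        crossing_horiz (u := a - q) (v := a - q') (by rw [s2, s2]; omega)]
    | rw [crossing_up (u := a' - q) (v := a' - q') (by rw [s2, s2]; omega),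
        crossing_up (u := a - q) (v := a - q') (by rw [s2, s2]; omega)]
    | rw [crossing_down (u := a' - q) (v := a' - q') (by rw [s2, s2]; omega),
        crossing_down (u := a - q) (v := a - q') (by rw [s2, s2]; omega)]
  all_goals simp only [s1, s2]
  all_goals split_ifs <;> omega

/-- The crossing number `X z` of a path from `p` to `q`, seen from a site `z` of the other colour
(the sum of `crossing` over the steps of the path translated by `-z`): its variation along edges, and
its value when the path lies entirely on one side of `z`. -/
theorem exists_crossing_number {ω : Conf} {b : Bool} {R : Set (ℤ × ℤ)} {x0 x1 : ℤ}
    (hR : ∀ x ∈ R, x0 ≤ x.1 ∧ x.1 ≤ x1) {p q : ℤ × ℤ}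
    (h : Relation.ReflTransGen (stepIn ω b R) p q) :
    ∃ X : ℤ × ℤ → ℤ,
      (∀ z z', adjZ2 z z' → ω z ≠ b → ω z' ≠ b →
        X z' - X z = crossing (q - z) (q - z') - crossing (p - z) (p - z')) ∧
      (∀ z, x1 ≤ z.1 → X z = 0) ∧
      (∀ z, ω z ≠ b → z.1 ≤ x0 →
        X z = (if 1 ≤ q.2 - z.2 then 1 else 0) - (if 1 ≤ p.2 - z.2 then 1 else 0)) := by
  induction h with
  | refl => exact ⟨fun _ => 0, by simp, by simp, by simp⟩
  | @tail u v _ hst ih =>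
    obtain ⟨X, h1, h2, h3⟩ := ih
    have hne : ∀ z, ω z ≠ b → u ≠ z ∧ v ≠ z := fun z hz =>
      ⟨fun e => hz (e ▸ hst.2.1.2), fun e => hz (e ▸ hst.2.2.2)⟩
    refine ⟨fun z => X z + crossing (u - z) (v - z), ?_, ?_, ?_⟩
    · intro z z' hzz hz hz'
      have e1 := h1 z z' hzz hz hz'
      have e2 := crossing_square hst.1 hzz (hne z hz).1 (hne z' hz').1 (hne z hz).2 (hne z' hz').2
      simp only
      linarith
    · intro z hz
      have hu := hR u hst.2.1.1
      have : crossing (u - z) (v - z) = 0 := by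
        simp only [crossing, Prod.fst_sub, Prod.snd_sub]
        rw [if_neg (by omega), if_neg (by omega)]; rfl
      simp only [h2 z hz, this, add_zero]
    · intro z hz hz'
      have hu := hR u hst.2.1.1
      have hv := hR v hst.2.2.1
      have n1 : ¬ (u.1 = z.1 ∧ u.2 = z.2) := fun e => (hne z hz).1 (Prod.ext e.1 e.2)
      have n2 : ¬ (v.1 = z.1 ∧ v.2 = z.2) := fun e => (hne z hz).2 (Prod.ext e.1 e.2)
      have hc := adjZ2_cases hst.1
      have : crossing (u - z) (v - z) =
          (if 1 ≤ v.2 - z.2 then 1 else 0) - (if 1 ≤ u.2 - z.2 then 1 else 0) := by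
        have s1 : (u - z).1 = u.1 - z.1 := rfl
        have s2 : (u - z).2 = u.2 - z.2 := rfl
        have s3 : (v - z).2 = v.2 - z.2 := rfl
        rcases hc with ⟨_, e⟩ | ⟨_, e⟩ | ⟨_, e⟩ | ⟨_, e⟩
        · rw [crossing_horiz (by rw [s2, s3]; omega), e]; ring
        · rw [crossing_horiz (by rw [s2, s3]; omega), e]; ring
        · rw [crossing_up (by rw [s2, s3]; omega), s1, s2]
          split_ifs <;> omega
        · rw [crossing_down (by rw [s2, s3]; omega), s1, s2]
          split_ifs <;> omega
      simp only [h3 z hz hz', this]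
      ring

/-- A bottom-to-top path of one colour and a left-to-right path of the other colour cannot
coexist: the difference vector of the two paths would have winding number one around the origin
without ever vanishing. -/
theorem no_cross {ω : Conf} {b b' : Bool} (hb : b ≠ b') {R R' : Set (ℤ × ℤ)} {x0 x1 y0 y1 : ℤ}
    (hR : ∀ x ∈ R, x0 ≤ x.1 ∧ x.1 ≤ x1) (hR' : ∀ x ∈ R', y0 ≤ x.2 ∧ x.2 ≤ y1)
    {p q p' q' : ℤ × ℤ} (h : Conn ω b R p q) (h' : Conn ω b' R' p' q')
    (hp : p.2 ≤ y0) (hq : y1 ≤ q.2) (hp' : p'.1 ≤ x0) (hq' : x1 ≤ q'.1) : False := by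
  obtain ⟨X, h1, h2, h3⟩ := exists_crossing_number hR h.2
  have hne : ∀ z, ω z = b' → ω z ≠ b := fun z hz e => hb (e.symm.trans hz)
  have hqz : ∀ z, ω z = b' → ¬ (q.1 = z.1 ∧ q.2 = z.2) := fun z hz e =>
    hne z hz ((Prod.ext e.1 e.2 : q = z) ▸ h.right.2)
  -- On `{y ≥ 0}` minus the origin, `crossing` is the gradient of an indicator.
  have key : ∀ z, Relation.ReflTransGen (stepIn ω b' R') p' z →
      X z - (if q.2 = z.2 ∧ z.1 + 1 ≤ q.1 then 0 else 1) =
        X p' - (if q.2 = p'.2 ∧ p'.1 + 1 ≤ q.1 then 0 else 1) := by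
    intro z hz
    induction hz with
    | refl => rfl
    | @tail u v _ hst ih =>
      rw [← ih]
      have e := h1 u v hst.1 (hne u hst.2.1.2) (hne v hst.2.2.2)
      have hu := hR' u hst.2.1.1
      have hv := hR' v hst.2.2.1
      have c1 := hqz u hst.2.1.2
      have c2 := hqz v hst.2.2.2
      have hc := adjZ2_cases hst.1
      have e1 : crossing (p - u) (p - v) = 0 := by
        simp only [crossing, Prod.fst_sub, Prod.snd_sub]
        rw [if_neg (by omega), if_neg (by omega)]; rfl
      have e2 : crossing (q - u) (q - v) = (if q.2 = v.2 ∧ v.1 + 1 ≤ q.1 then 0 else 1)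
          - (if q.2 = u.2 ∧ u.1 + 1 ≤ q.1 then 0 else 1) := by
        have s1 : (q - u).1 = q.1 - u.1 := rfl
        have s2 : (q - u).2 = q.2 - u.2 := rfl
        have s3 : (q - v).2 = q.2 - v.2 := rfl
        rcases hc with ⟨i1, i2⟩ | ⟨i1, i2⟩ | ⟨i1, i2⟩ | ⟨i1, i2⟩
        · rw [crossing_horiz (by rw [s2, s3]; omega)]
          split_ifs <;> omega
        · rw [crossing_horiz (by rw [s2, s3]; omega)]
          split_ifs <;> omega
        · rw [crossing_down (by rw [s2, s3]; omega), s1, s2]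
          split_ifs <;> omega
        · rw [crossing_up (by rw [s2, s3]; omega), s1, s2]
          split_ifs <;> omega
      rw [e1, e2] at e
      linarith
  have e := key q' h'.2
  have k1 := hR p h.1.1
  have k2 := hR q h.right.1
  have k3 := hR' p' h'.1.1
  have c := hqz p' h'.1.2
  rw [h2 q' hq', h3 p' (hne p' h'.1.2) hp', if_neg (by omega : ¬ (1 ≤ p.2 - p'.2)),
    if_neg (by omega : ¬ (q.2 = q'.2 ∧ q'.1 + 1 ≤ q.1))] at e
  split_ifs at e <;> omega

/-! ### Opposite sides in a grid of positions -/

/-- A discrete Hex-type statement for positions `(i, j)` in a grid, each labelled by the sides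
(top, bottom, left, right) that are reachable from it: two opposite sides are reachable from equal
or `*`-adjacent positions. -/
theorem exists_opposite_pair (T B L R : ℤ → ℤ → Prop) (i0 i1 j0 j1 : ℤ) (hi : i0 ≤ i1)
    (hj : j0 ≤ j1)
    (hB : ∀ i, i0 ≤ i → i ≤ i1 → B i j0) (hT : ∀ i, i0 ≤ i → i ≤ i1 → T i j1)
    (mT : ∀ i j, i0 ≤ i → i ≤ i1 → j0 ≤ j → j + 1 ≤ j1 → T i j → T i (j + 1))
    (mB : ∀ i j, i0 ≤ i → i ≤ i1 → j0 ≤ j → j + 1 ≤ j1 → B i (j + 1) → B i j)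
    (hall : ∀ i j, i0 ≤ i → i ≤ i1 → j0 ≤ j → j ≤ j1 → T i j ∨ B i j ∨ L i j ∨ R i j)
    (hleft : ∀ j, j0 ≤ j → j ≤ j1 → T i0 j ∨ B i0 j ∨ L i0 j)
    (hright : ∀ j, j0 ≤ j → j ≤ j1 → T i1 j ∨ B i1 j ∨ R i1 j) :
    ∃ i j i' j' : ℤ, (i0 ≤ i ∧ i ≤ i1 ∧ j0 ≤ j ∧ j ≤ j1) ∧ (i0 ≤ i' ∧ i' ≤ i1 ∧ j0 ≤ j' ∧ j' ≤ j1) ∧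
      (-1 ≤ i - i' ∧ i - i' ≤ 1 ∧ -1 ≤ j - j' ∧ j - j' ≤ 1) ∧
      ((T i j ∧ B i' j') ∨ (L i j ∧ R i' j')) := by
  by_contra hcon
  have nTB : ∀ i j i' j', i0 ≤ i → i ≤ i1 → j0 ≤ j → j ≤ j1 → i0 ≤ i' → i' ≤ i1 → j0 ≤ j' →
      j' ≤ j1 → (-1 ≤ i - i' ∧ i - i' ≤ 1 ∧ -1 ≤ j - j' ∧ j - j' ≤ 1) → T i j → ¬ B i' j' :=
    fun i j i' j' a1 a2 a3 a4 b1 b2 b3 b4 c h h' =>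
      hcon ⟨i, j, i', j', ⟨a1, a2, a3, a4⟩, ⟨b1, b2, b3, b4⟩, c, Or.inl ⟨h, h'⟩⟩
  have nLR : ∀ i j i' j', i0 ≤ i → i ≤ i1 → j0 ≤ j → j ≤ j1 → i0 ≤ i' → i' ≤ i1 → j0 ≤ j' →
      j' ≤ j1 → (-1 ≤ i - i' ∧ i - i' ≤ 1 ∧ -1 ≤ j - j' ∧ j - j' ≤ 1) → L i j → ¬ R i' j' :=
    fun i j i' j' a1 a2 a3 a4 b1 b2 b3 b4 c h h' =>
      hcon ⟨i, j, i', j', ⟨a1, a2, a3, a4⟩, ⟨b1, b2, b3, b4⟩, c, Or.inr ⟨h, h'⟩⟩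
  -- Some height is free of `T` and `B` in both (adjacent or equal) columns.
  have free : ∀ i i', i0 ≤ i → i ≤ i1 → i0 ≤ i' → i' ≤ i1 → -1 ≤ i - i' → i - i' ≤ 1 →
      ∃ j, j0 ≤ j ∧ j ≤ j1 ∧ ¬ T i j ∧ ¬ B i j ∧ ¬ T i' j ∧ ¬ B i' j := by
    intro i i' a1 a2 b1 b2 c1 c2
    obtain ⟨J, ⟨hJ0, hJ1, hJ⟩, hmax⟩ := Int.exists_greatest_of_bdd
      (P := fun j => j0 ≤ j ∧ j ≤ j1 ∧ (B i j ∨ B i' j)) ⟨j1, fun z hz => hz.2.1⟩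
      ⟨j0, le_rfl, hj, Or.inl (hB i a1 a2)⟩
    have hlt : J < j1 := by
      rcases hJ1.lt_or_eq with h | h
      · exact h
      · subst h
        rcases hJ with hJ | hJ
        · exact absurd hJ (nTB i J i J a1 a2 hJ0 hJ1 a1 a2 hJ0 hJ1 (by omega) (hT i a1 a2))
        · exact absurd hJ (nTB i' J i' J b1 b2 hJ0 hJ1 b1 b2 hJ0 hJ1 (by omega) (hT i' b1 b2))
    have hnB : ¬ (B i (J + 1) ∨ B i' (J + 1)) := fun h => by
      have := hmax (J + 1) ⟨by omega, by omega, h⟩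
      omega
    refine ⟨J + 1, by omega, by omega, fun h => ?_, fun h => hnB (Or.inl h), fun h => ?_,
      fun h => hnB (Or.inr h)⟩
    · rcases hJ with hJ | hJ
      · exact nTB i (J + 1) i J a1 a2 (by omega) (by omega) a1 a2 hJ0 hJ1 (by omega) h hJ
      · exact nTB i (J + 1) i' J a1 a2 (by omega) (by omega) b1 b2 hJ0 hJ1 (by omega) h hJ
    · rcases hJ with hJ | hJ
      · exact nTB i' (J + 1) i J b1 b2 (by omega) (by omega) a1 a2 hJ0 hJ1 (by omega) h hJ
      · exact nTB i' (J + 1) i' J b1 b2 (by omega) (by omega) b1 b2 hJ0 hJ1 (by omega) h hJ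
  -- `L` passes to adjacent positions from which neither top nor bottom is reachable.
  have stepL : ∀ i i' j j', i0 ≤ i → i ≤ i1 → j0 ≤ j → j ≤ j1 → i0 ≤ i' → i' ≤ i1 → j0 ≤ j' →
      j' ≤ j1 → (-1 ≤ i - i' ∧ i - i' ≤ 1 ∧ -1 ≤ j - j' ∧ j - j' ≤ 1) → L i j →
      ¬ T i' j' → ¬ B i' j' → L i' j' := by
    intro i i' j j' a1 a2 a3 a4 b1 b2 b3 b4 c hL hT' hB'
    rcases hall i' j' b1 b2 b3 b4 with h | h | h | h
    · exact absurd h hT'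
    · exact absurd h hB'
    · exact h
    · exact absurd h (nLR i j i' j' a1 a2 a3 a4 b1 b2 b3 b4 c hL)
  have up : ∀ i j, i0 ≤ i → i ≤ i1 → j0 ≤ j → j ≤ j1 → L i j → ¬ T i j → ¬ B i j →
      ∀ n : ℕ, j + n ≤ j1 → ¬ T i (j + n) → L i (j + n) ∧ ¬ B i (j + n) := by
    intro i j a1 a2 a3 a4 hL hT' hB' n
    induction n with
    | zero => intro _ _; simpa using ⟨hL, hB'⟩
    | succ n ih =>
      intro h1 h2
      push_cast at h1 h2 ⊢
      have e : j + ((n : ℤ) + 1) = (j + n) + 1 := by ring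
      rw [e] at h1 h2 ⊢
      have hTn : ¬ T i (j + n) := fun h => h2 (mT i _ a1 a2 (by omega) h1 h)
      obtain ⟨hLn, hBn⟩ := ih (by omega) hTn
      have hBn' : ¬ B i (j + n + 1) := fun h => hBn (mB i _ a1 a2 (by omega) h1 h)
      exact ⟨stepL i i _ _ a1 a2 (by omega) (by omega) a1 a2 (by omega) h1 (by omega) hLn h2 hBn',
        hBn'⟩
  have down : ∀ i j, i0 ≤ i → i ≤ i1 → j0 ≤ j → j ≤ j1 → L i j → ¬ T i j → ¬ B i j →
      ∀ n : ℕ, j0 ≤ j - n → ¬ B i (j - n) → L i (j - n) ∧ ¬ T i (j - n) := by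
    intro i j a1 a2 a3 a4 hL hT' hB' n
    induction n with
    | zero => intro _ _; simpa using ⟨hL, hT'⟩
    | succ n ih =>
      intro h1 h2
      push_cast at h1 h2 ⊢
      have e : j - n = (j - ((n : ℤ) + 1)) + 1 := by ring
      have hBn : ¬ B i (j - n) := fun h => h2 (mB i _ a1 a2 h1 (by omega) (e ▸ h))
      obtain ⟨hLn, hTn⟩ := ih (by omega) hBn
      have hTn' : ¬ T i (j - ((n : ℤ) + 1)) := fun h =>
        hTn (by rw [e]; exact mT i _ a1 a2 h1 (by omega) h)
      exact ⟨stepL i i _ _ a1 a2 (by omega) (by omega) a1 a2 h1 (by omega) (by omega) hLn hTn' h2,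
        hTn'⟩
  have all : ∀ i j j', i0 ≤ i → i ≤ i1 → j0 ≤ j → j ≤ j1 → j0 ≤ j' → j' ≤ j1 → L i j →
      ¬ T i j → ¬ B i j → ¬ T i j' → ¬ B i j' → L i j' := by
    intro i j j' a1 a2 a3 a4 b3 b4 hL hT1 hB1 hT2 hB2
    rcases le_total j j' with h | h
    · obtain ⟨n, rfl⟩ := Int.le.dest h
      exact (up i j a1 a2 a3 a4 hL hT1 hB1 n b4 hT2).1
    · obtain ⟨n, hn⟩ := Int.le.dest h
      have e : j' = j - n := by omega
      subst e
      exact (down i j a1 a2 a3 a4 hL hT1 hB1 n b3 hB2).1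
  have main : ∀ n : ℕ, i0 + n ≤ i1 → ∀ j, j0 ≤ j → j ≤ j1 → ¬ T (i0 + n) j → ¬ B (i0 + n) j →
      L (i0 + n) j := by
    intro n
    induction n with
    | zero =>
      intro _ j h1 h2 h3 h4
      simp only [Nat.cast_zero, add_zero] at h3 h4 ⊢
      rcases hleft j h1 h2 with h | h | h
      · exact absurd h h3
      · exact absurd h h4
      · exact h
    | succ n ih =>
      intro hn j h1 h2 h3 h4
      push_cast at hn h3 h4 ⊢
      obtain ⟨J, a1, a2, a3, a4, a5, a6⟩ := free (i0 + n) (i0 + (n + 1)) (by omega) (by omega)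
        (by omega) (by omega) (by omega) (by omega)
      have hL := ih (by omega) J a1 a2 a3 a4
      have hL' := stepL _ _ _ _ (by omega) (by omega) a1 a2 (by omega) hn a1 a2
        (by omega) hL a5 a6
      exact all _ J j (by omega) hn a1 a2 h1 h2 hL' a5 a6 h3 h4
  obtain ⟨J, a1, a2, a3, a4, -, -⟩ := free i1 i1 hi le_rfl hi le_rfl (by omega) (by omega)
  obtain ⟨n, hn⟩ := Int.le.dest hi
  have hL := main n hn.le J a1 a2 (hn ▸ a3) (hn ▸ a4)
  rw [hn] at hL
  rcases hright J a1 a2 with h | h | h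
  · exact a3 h
  · exact a4 h
  · exact nLR i1 J i1 J hi le_rfl a1 a2 hi le_rfl a1 a2 (by omega) hL h

/-! ### Connection events -/

/-- The event that a path of colour `b` inside `R` joins `X` to `Y`. -/
def Ev (b : Bool) (R X Y : Set (ℤ × ℤ)) : Set Conf :=
  {ω | ∃ x ∈ X, ∃ y ∈ Y, Conn ω b R x y}

/-- Both colours occur, and each of them is connected. -/
def Nice (ω : Conf) : Prop :=
  ∀ b, (∃ x, ω x = b) ∧ ∀ x y, ω x = b → ω y = b → Conn ω b Set.univ x y

/-- The square `[-n, n]²`. -/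
def Lam (n : ℤ) : Set (ℤ × ℤ) := {x | (-n ≤ x.1 ∧ x.1 ≤ n) ∧ (-n ≤ x.2 ∧ x.2 ≤ n)}

theorem Lam_mono {m n : ℤ} (h : m ≤ n) : Lam m ⊆ Lam n := by
  rintro x ⟨⟨_, _⟩, _, _⟩
  exact ⟨⟨by omega, by omega⟩, by omega, by omega⟩

theorem exists_mem_Lam (x : ℤ × ℤ) : ∃ n : ℕ, ∀ m : ℤ, n ≤ m → x ∈ Lam m :=
  ⟨x.1.natAbs + x.2.natAbs, fun m hm => by
    exact ⟨⟨by omega, by omega⟩, by omega, by omega⟩⟩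

theorem Ev_mono {b : Bool} {R R' X X' Y Y' : Set (ℤ × ℤ)} (hR : R ⊆ R') (hX : X ⊆ X')
    (hY : Y ⊆ Y') : Ev b R X Y ⊆ Ev b R' X' Y' := by
  rintro ω ⟨x, hx, y, hy, h⟩
  exact ⟨x, hX hx, y, hY hy, h.mono hR⟩

theorem measurableSet_color (b : Bool) (x : ℤ × ℤ) : MeasurableSet {ω : Conf | ω x = b} :=
  measurableSet_eq_fun (measurable_pi_apply x) measurable_const

theorem measurableSet_reflTransGen {α Ω : Type*} [Countable α] [MeasurableSpace Ω]
    (r : Ω → α → α → Prop) (hr : ∀ a b, MeasurableSet {ω | r ω a b}) (x y : α) :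
    MeasurableSet {ω | Relation.ReflTransGen (r ω) x y} := by
  let P : ℕ → Ω → α → α → Prop := fun n =>
    Nat.rec (fun _ a b => a = b) (fun _ Q ω a b => ∃ c, Q ω a c ∧ r ω c b) n
  have hP : ∀ n a b, MeasurableSet {ω | P n ω a b} := by
    intro n
    induction n with
    | zero => exact fun a b => MeasurableSet.const (a = b)
    | succ n ih =>
      intro a b
      have : {ω | P (n + 1) ω a b} = ⋃ c, {ω | P n ω a c} ∩ {ω | r ω c b} := by
        ext ω
        simp only [Set.mem_iUnion]
        rfl
      rw [this]
      exact MeasurableSet.iUnion fun c => (ih a c).inter (hr c b)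
  have : {ω | Relation.ReflTransGen (r ω) x y} = ⋃ n, {ω | P n ω x y} := by
    ext ω
    simp only [Set.mem_iUnion, Set.mem_ofPred_eq]
    constructor
    · intro h
      induction h with
      | refl => exact ⟨0, rfl⟩
      | tail _ h ih =>
        obtain ⟨n, hn⟩ := ih
        exact ⟨n + 1, _, hn, h⟩
    · rintro ⟨n, hn⟩
      induction n generalizing y with
      | zero => exact (show x = y from hn) ▸ .refl
      | succ n ih =>
        obtain ⟨c, hc, h⟩ := hn
        exact (ih c hc).tail h
  rw [this]
  exact MeasurableSet.iUnion fun n => hP n x y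

theorem measurableSet_conn (b : Bool) (R : Set (ℤ × ℤ)) (x y : ℤ × ℤ) :
    MeasurableSet {ω | Conn ω b R x y} := by
  refine MeasurableSet.inter ((MeasurableSet.const (x ∈ R)).inter (measurableSet_color b x))
    (measurableSet_reflTransGen _ (fun a c => ?_) x y)
  exact (MeasurableSet.const _).inter (((MeasurableSet.const _).inter
    (measurableSet_color b a)).inter ((MeasurableSet.const _).inter (measurableSet_color b c)))

theorem measurableSet_Ev (b : Bool) (R X Y : Set (ℤ × ℤ)) : MeasurableSet (Ev b R X Y) := by
  have : Ev b R X Y = ⋃ x ∈ X, ⋃ y ∈ Y, {ω | Conn ω b R x y} := by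
    ext ω
    simp [Ev]
  rw [this]
  exact MeasurableSet.biUnion X.to_countable fun x _ =>
    MeasurableSet.biUnion Y.to_countable fun y _ => measurableSet_conn b R x y

theorem measurableSet_connectedIn (b : Bool) :
    MeasurableSet {ω : Conf | ConnectedIn {x | ω x = b}} := by
  have : {ω : Conf | ConnectedIn {x | ω x = b}} = ⋂ x, ⋂ y, {ω | ω x = b}ᶜ ∪ ({ω | ω y = b}ᶜ ∪
      {ω : Conf | Relation.ReflTransGen
        (fun a c => adjZ2 a c ∧ a ∈ {x | ω x = b} ∧ c ∈ {x | ω x = b}) x y}) := by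
    ext ω
    simp only [Set.mem_iInter, Set.mem_union, Set.mem_compl_iff, Set.mem_ofPred_eq, ConnectedIn]
    refine forall_congr' fun x => ⟨fun h y => ?_, fun h hx y hy => ?_⟩
    · by_cases hx : ω x = b
      · by_cases hy : ω y = b
        · exact Or.inr (Or.inr (h hx y hy))
        · exact Or.inr (Or.inl hy)
      · exact Or.inl hx
    · exact ((h y).resolve_left (not_not.2 hx)).resolve_left (not_not.2 hy)
  rw [this]
  refine MeasurableSet.iInter fun x => MeasurableSet.iInter fun y =>
    (measurableSet_color b x).compl.union ((measurableSet_color b y).compl.union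
      (measurableSet_reflTransGen _ (fun a c => ?_) x y))
  exact (MeasurableSet.const _).inter ((measurableSet_color b a).inter (measurableSet_color b c))

theorem measurableSet_infinite (b : Bool) :
    MeasurableSet {ω : Conf | {x | ω x = b}.Infinite} := by
  have : {ω : Conf | {x | ω x = b}.Infinite} =
      ⋂ F : Finset (ℤ × ℤ), ⋃ x : ℤ × ℤ, {ω | x ∉ F} ∩ {ω : Conf | ω x = b} := by
    ext ω
    simp only [Set.mem_iInter, Set.mem_iUnion]
    constructor
    · intro h F
      obtain ⟨x, hx, hF⟩ := h.exists_notMem_finset F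
      exact ⟨x, hF, hx⟩
    · intro h hf
      obtain ⟨x, hF, hx⟩ := h hf.toFinset
      exact hF (hf.mem_toFinset.2 hx)
  rw [this]
  exact MeasurableSet.iInter fun F => MeasurableSet.iUnion fun x =>
    (MeasurableSet.const _).inter (measurableSet_color b x)

theorem measurableSet_goodEvent : MeasurableSet GoodEvent :=
  (measurableSet_infinite true).inter ((measurableSet_connectedIn true).inter
    ((measurableSet_infinite false).inter (measurableSet_connectedIn false)))

theorem conn_of_connectedIn {ω : Conf} {b : Bool} (h : ConnectedIn {x | ω x = b}) {x y : ℤ × ℤ}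
    (hx : ω x = b) (hy : ω y = b) : Conn ω b Set.univ x y :=
  ⟨⟨trivial, hx⟩, Relation.ReflTransGen.mono
    (fun _ _ k => ⟨k.1, ⟨trivial, k.2.1⟩, trivial, k.2.2⟩) _ _ (h x hx y hy)⟩

theorem nice_of_mem_goodEvent {ω : Conf} (h : ω ∈ GoodEvent) : Nice ω := by
  obtain ⟨h1, h2, h3, h4⟩ := h
  intro b
  cases b
  · exact ⟨h3.nonempty, fun x y => conn_of_connectedIn h4⟩
  · exact ⟨h1.nonempty, fun x y => conn_of_connectedIn h2⟩

/-- A path is finite, hence stays in some square. -/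
theorem Conn.exists_Lam {ω : Conf} {b : Bool} {x y : ℤ × ℤ} (h : Conn ω b Set.univ x y) :
    ∃ n : ℕ, ∀ m : ℤ, n ≤ m → Conn ω b (Lam m) x y := by
  have h2 := h.2
  induction h2 with
  | refl =>
    obtain ⟨n, hn⟩ := exists_mem_Lam x
    exact ⟨n, fun m hm => ⟨⟨hn m hm, h.1.2⟩, .refl⟩⟩
  | @tail u v huv hst ih =>
    obtain ⟨n, hn⟩ := ih ⟨h.1, huv⟩
    obtain ⟨n', hn'⟩ := exists_mem_Lam v
    refine ⟨max n n', fun m hm => ?_⟩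
    rw [Nat.cast_max, max_le_iff] at hm
    have c := hn m hm.1
    exact ⟨c.1, c.2.tail ⟨hst.1, c.right, hn' m hm.2, hst.2.2.2⟩⟩

theorem Conn.of_color {ω ω' : Conf} {b : Bool} {R : Set (ℤ × ℤ)} {x y : ℤ × ℤ}
    (h : Conn ω b R x y) (hω : ∀ z, ω z = b → ω' z = b) : Conn ω' b R x y :=
  ⟨⟨h.1.1, hω _ h.1.2⟩, Relation.ReflTransGen.mono
    (fun _ _ k => ⟨k.1, ⟨k.2.1.1, hω _ k.2.1.2⟩, k.2.2.1, hω _ k.2.2.2⟩) _ _ h.2⟩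

theorem increasing_Ev_true (R X Y : Set (ℤ × ℤ)) : IncreasingEvent (Ev true R X Y) := by
  rintro ω ω' ⟨x, hx, y, hy, h⟩ hω
  refine ⟨x, hx, y, hy, h.of_color fun z hz => ?_⟩
  have := hω z
  rw [hz] at this
  exact top_le_iff.1 this

theorem increasing_Ev_false (R X Y : Set (ℤ × ℤ)) : IncreasingEvent (Ev false R X Y)ᶜ := by
  rintro ω ω' hn hω ⟨x, hx, y, hy, h⟩
  refine hn ⟨x, hx, y, hy, h.of_color fun z hz => ?_⟩
  have := hω z
  rw [hz] at this
  exact le_bot_iff.1 this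

theorem Conn.translate {ω : Conf} {b : Bool} {R R' : Set (ℤ × ℤ)} {x y : ℤ × ℤ}
    (h : Conn ω b R x y) (v : ℤ × ℤ) (hR : ∀ z ∈ R, z + v ∈ R') :
    Conn (translateConf v ω) b R' (x + v) (y + v) := by
  have hc : ∀ z, translateConf v ω (z + v) = ω z := fun z => by simp [translateConf]
  refine ⟨⟨hR x h.1.1, (hc x).trans h.1.2⟩,
    Relation.ReflTransGen.lift (fun z => z + v) (fun a c k => ?_) _ _ h.2⟩
  refine ⟨?_, ⟨hR a k.2.1.1, (hc a).trans k.2.1.2⟩, hR c k.2.2.1, (hc c).trans k.2.2.2⟩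
  have := k.1
  simp only [adjZ2, Prod.fst_add, Prod.snd_add] at this ⊢
  omega

theorem measurable_translateConf (v : ℤ × ℤ) : Measurable (translateConf v) :=
  measurable_pi_lambda _ fun x => measurable_pi_apply (x - v)

/-! ### Invariant laws -/

/-- A law on configurations in which both colours occur and are connected almost surely, which is
invariant under `K ℤ²` and satisfies the FKG inequality up to the factor `p`. Conditioning an FKG
measure on `GoodEvent` produces such a law. -/
structure Setup (K : ℤ) (p : ℝ) (μ : Measure Conf) : Prop where
  prob : IsProbabilityMeasure μ
  hK : 1 ≤ K
  p_pos : 0 < p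
  p_le : p ≤ 1
  nice : ∀ᵐ ω ∂μ, Nice ω
  inv : ∀ m n : ℤ, μ.map (translateConf (K * m, K * n)) = μ
  fkg : ∀ A B : Set Conf, MeasurableSet A → MeasurableSet B → IncreasingEvent A →
    IncreasingEvent B → p * μ.real A * μ.real B ≤ μ.real (A ∩ B)

theorem Setup.shift_le {K : ℤ} {p : ℝ} {μ : Measure Conf} (S : Setup K p μ) (m n : ℤ) {b : Bool}
    {R X Y R' X' Y' : Set (ℤ × ℤ)} (hR : ∀ z ∈ R, z + (K * m, K * n) ∈ R')
    (hX : ∀ z ∈ X, z + (K * m, K * n) ∈ X') (hY : ∀ z ∈ Y, z + (K * m, K * n) ∈ Y') :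
    μ.real (Ev b R X Y) ≤ μ.real (Ev b R' X' Y') := by
  have := S.prob
  have h : Ev b R X Y ⊆ translateConf (K * m, K * n) ⁻¹' Ev b R' X' Y' := by
    rintro ω ⟨x, hx, y, hy, h⟩
    exact ⟨_, hX x hx, _, hY y hy, h.translate _ hR⟩
  calc μ.real (Ev b R X Y) ≤ μ.real (translateConf (K * m, K * n) ⁻¹' Ev b R' X' Y') :=
        measureReal_mono h
    _ = (μ.map (translateConf (K * m, K * n))).real (Ev b R' X' Y') :=
        (map_measureReal_apply (measurable_translateConf _) (measurableSet_Ev _ _ _ _)).symm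
    _ = _ := by rw [S.inv]

/-- If almost every `ω ∈ E` eventually belongs to `A m`, then `liminf μ (A m) ≥ μ E`. -/
theorem eventually_real_ge {μ : Measure Conf} [IsProbabilityMeasure μ] {E : Set Conf}
    {A : ℤ → Set Conf} (h : ∀ᵐ ω ∂μ, ω ∈ E → ∀ᶠ m in Filter.atTop, ω ∈ A m) {c : ℝ}
    (hc : c < μ.real E) : ∀ᶠ m in Filter.atTop, c ≤ μ.real (A m) := by
  let D : ℤ → Set Conf := fun a => ⋂ m, ⋂ (_ : a ≤ m), A m
  have hD : Monotone D := fun a a' haa ω hω => by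
    simp only [D, Set.mem_iInter] at hω ⊢
    exact fun m hm => hω m (haa.trans hm)
  have hE : μ E ≤ μ (⋃ a, D a) := by
    refine measure_mono_ae ?_
    filter_upwards [h] with ω hω hωE
    obtain ⟨a, ha⟩ := Filter.eventually_atTop.1 (hω hωE)
    refine Set.mem_iUnion.2 ⟨a, ?_⟩
    simpa only [D, Set.mem_iInter] using ha
  have lim := (ENNReal.tendsto_toReal (measure_ne_top μ _)).comp
    (tendsto_measure_iUnion_atTop (μ := μ) hD)
  have hlt : c < (μ (⋃ a, D a)).toReal :=
    hc.trans_le (ENNReal.toReal_mono (measure_ne_top μ _) hE)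
  filter_upwards [lim.eventually_const_lt hlt] with m hm
  refine hm.le.trans (measureReal_mono (μ := μ) ?_)
  intro ω hω
  simp only [D, Set.mem_iInter] at hω
  exact hω m le_rfl

/-- Every half-plane contains sites of both colours: by invariance, the probability that the
half-plane `{N ≤ f}` has no site of colour `b` does not depend on `N`. -/
theorem Setup.ae_color {K : ℤ} {p : ℝ} {μ : Measure Conf} (S : Setup K p μ) (b : Bool)
    {f : ℤ × ℤ → ℤ} {m n : ℤ} (hf : ∀ x (j : ℤ), f (x + (K * (j * m), K * (j * n))) = f x + K * j) :
    ∀ᵐ ω ∂μ, ∀ N : ℤ, ∃ x, N ≤ f x ∧ ω x = b := by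
  have := S.prob
  rw [ae_all_iff]
  intro N
  let E : Set Conf := {ω | ∃ x, N ≤ f x ∧ ω x = b}
  have hE : MeasurableSet E := by
    have : E = ⋃ x, {ω : Conf | N ≤ f x} ∩ {ω : Conf | ω x = b} := by
      ext ω
      simp only [Set.mem_iUnion]
      rfl
    rw [this]
    exact MeasurableSet.iUnion fun x => (MeasurableSet.const _).inter (measurableSet_color b x)
  have key : ∀ c : ℝ, c < 1 → c ≤ μ.real E := by
    intro c hc
    have h1 : ∀ᵐ ω ∂μ, ω ∈ Set.univ → ∀ᶠ j : ℤ in Filter.atTop,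
        ω ∈ translateConf (K * (j * m), K * (j * n)) ⁻¹' E := by
      filter_upwards [S.nice] with ω hω _
      obtain ⟨x, hx⟩ := (hω b).1
      filter_upwards [Filter.eventually_ge_atTop (N.natAbs + (f x).natAbs : ℤ)] with j hj
      refine ⟨x + (K * (j * m), K * (j * n)), ?_, by simpa [translateConf] using hx⟩
      rw [hf]
      have : j ≤ K * j := le_mul_of_one_le_left (by omega) S.hK
      omega
    obtain ⟨j, hj⟩ := (eventually_real_ge h1 (c := c) (by simpa using hc)).exists
    rwa [← map_measureReal_apply (measurable_translateConf _) hE, S.inv] at hj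
  have h1 : μ.real E = 1 := le_antisymm measureReal_le_one (by
    by_contra! h
    linarith [key ((1 + μ.real E) / 2) (by linarith)])
  exact (prob_compl_eq_zero_iff hE).2 (by
    rw [← ENNReal.toReal_eq_one_iff]; exact h1)

theorem Setup.ae_sides {K : ℤ} {p : ℝ} {μ : Measure Conf} (S : Setup K p μ) (b : Bool) :
    ∀ᵐ ω ∂μ, ∀ N : ℤ, (∃ x : ℤ × ℤ, N ≤ x.1 ∧ ω x = b) ∧ (∃ x : ℤ × ℤ, x.1 ≤ -N ∧ ω x = b) ∧
      (∃ x : ℤ × ℤ, N ≤ x.2 ∧ ω x = b) ∧ (∃ x : ℤ × ℤ, x.2 ≤ -N ∧ ω x = b) := by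
  filter_upwards [S.ae_color b (f := fun x => x.1) (m := 1) (n := 0) (by intro x j; simp),
    S.ae_color b (f := fun x => -x.1) (m := -1) (n := 0) (by intro x j; simp; ring),
    S.ae_color b (f := fun x => x.2) (m := 0) (n := 1) (by intro x j; simp),
    S.ae_color b (f := fun x => -x.2) (m := 0) (n := -1) (by intro x j; simp; ring)]
    with ω h1 h2 h3 h4 N
  obtain ⟨x, hx, hx'⟩ := h2 N
  obtain ⟨y, hy, hy'⟩ := h4 N
  exact ⟨h1 N, ⟨x, by omega, hx'⟩, h3 N, ⟨y, by omega, hy'⟩⟩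

theorem Lam_finite (q : ℤ) : (Lam q).Finite := by
  refine Set.Finite.subset ((Set.finite_Icc (-q) q).prod (Set.finite_Icc (-q) q)) ?_
  rintro x ⟨h1, h2⟩
  exact ⟨h1, h2⟩

/-- All sites of colour `b` in `Λ_q` are connected inside `Λ_m`. -/
def Wired (b : Bool) (q m : ℤ) : Set Conf :=
  {ω | ∀ x ∈ Lam q, ∀ y ∈ Lam q, ω x = b → ω y = b → Conn ω b (Lam m) x y}

theorem Setup.eventually_wired {K : ℤ} {p : ℝ} {μ : Measure Conf} (S : Setup K p μ) (b : Bool)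
    (q : ℤ) {c : ℝ} (hc : c < 1) : ∀ᶠ m in Filter.atTop, c ≤ μ.real (Wired b q m) := by
  have := S.prob
  refine eventually_real_ge (E := Set.univ) ?_ (by simpa using hc)
  filter_upwards [S.nice] with ω hω _
  refine (Filter.eventually_all_finite (Lam_finite q)).2 fun x _ =>
    (Filter.eventually_all_finite (Lam_finite q)).2 fun y _ => ?_
  by_cases hx : ω x = b
  · by_cases hy : ω y = b
    · obtain ⟨n, hn⟩ := ((hω b).2 x y hx hy).exists_Lam
      filter_upwards [Filter.eventually_ge_atTop (n : ℤ)] with m hm _ _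
      exact hn m hm
    · exact Filter.Eventually.of_forall fun m _ h => absurd h hy
  · exact Filter.Eventually.of_forall fun m h => absurd h hx

/-- Sets that almost surely contain sites of colour `b` are connected inside large squares. -/
theorem Setup.eventually_joined {K : ℤ} {p : ℝ} {μ : Measure Conf} (S : Setup K p μ) (b : Bool)
    {X Y : Set (ℤ × ℤ)} {c : ℝ} (hX : c < μ.real {ω | ∃ x ∈ X, ω x = b})
    (hY : ∀ᵐ ω ∂μ, ∃ y ∈ Y, ω y = b) :
    ∀ᶠ m in Filter.atTop, c ≤ μ.real (Ev b (Lam m) X Y) := by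
  have := S.prob
  refine eventually_real_ge ?_ hX
  filter_upwards [S.nice, hY] with ω hω ⟨y, hy, hy'⟩ ⟨x, hx, hx'⟩
  obtain ⟨n, hn⟩ := ((hω b).2 x y hx' hy').exists_Lam
  filter_upwards [Filter.eventually_ge_atTop (n : ℤ)] with m hm
  exact ⟨x, hx, y, hy, hn m hm⟩

/-! ### Escaping from rectangles and gluing -/

/-- The rectangle `[a, a'] × [c, c']`. -/
def Box (a a' c c' : ℤ) : Set (ℤ × ℤ) := {x | (a ≤ x.1 ∧ x.1 ≤ a') ∧ (c ≤ x.2 ∧ x.2 ≤ c')}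

/-- A path from `X` to a set outside `R` passes, when it first leaves `R`, through one of the parts
of the boundary of `R` where leaving is possible. -/
theorem Ev_exit {b : Bool} {R' R X H Y1 Y2 Y3 Y4 : Set (ℤ × ℤ)} (hX : X ⊆ R) (hH : ∀ y ∈ H, y ∉ R)
    (hex : ∀ w w', w ∈ R → w' ∈ R' → w' ∉ R → adjZ2 w w' →
      w ∈ Y1 ∨ w ∈ Y2 ∨ w ∈ Y3 ∨ w ∈ Y4) :
    Ev b R' X H ⊆ Ev b R X Y1 ∪ Ev b R X Y2 ∪ Ev b R X Y3 ∪ Ev b R X Y4 := by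
  rintro ω ⟨x, hx, y, hy, h⟩
  obtain ⟨w, w', hc, hadj, h1, h2⟩ := h.exit (hX hx) (hH y hy)
  have hc' := hc.mono Set.inter_subset_right
  rcases hex w w' hc.right.1.2 h1 h2 hadj with h | h | h | h
  · exact Or.inl (Or.inl (Or.inl ⟨x, hx, w, h, hc'⟩))
  · exact Or.inl (Or.inl (Or.inr ⟨x, hx, w, h, hc'⟩))
  · exact Or.inl (Or.inr ⟨x, hx, w, h, hc'⟩)
  · exact Or.inr ⟨x, hx, w, h, hc'⟩

/-- Consequences of the FKG inequality for connection events of colour `b`: if four such events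
cover probability `1 - ε`, then one of them is likely (probability at least `t`); two likely events
occur together with probability at least `s`. -/
structure Thr (μ : Measure Conf) (b : Bool) (t s ε : ℝ) : Prop where
  ε_pos : 0 < ε
  four : ∀ R X Y1 Y2 Y3 Y4 : Set (ℤ × ℤ),
    1 - ε ≤ μ.real (Ev b R X Y1 ∪ Ev b R X Y2 ∪ Ev b R X Y3 ∪ Ev b R X Y4) →
      t ≤ μ.real (Ev b R X Y1) ∨ t ≤ μ.real (Ev b R X Y2) ∨ t ≤ μ.real (Ev b R X Y3) ∨
        t ≤ μ.real (Ev b R X Y4)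
  two : ∀ R X Y R' X' Y' : Set (ℤ × ℤ), t ≤ μ.real (Ev b R X Y) → t ≤ μ.real (Ev b R' X' Y') →
    s ≤ μ.real (Ev b R X Y ∩ Ev b R' X' Y')

theorem Thr.exit {μ : Measure Conf} [IsProbabilityMeasure μ] {b : Bool} {t s ε : ℝ}
    (Th : Thr μ b t s ε) {R' R X H Y1 Y2 Y3 Y4 : Set (ℤ × ℤ)}
    (h : 1 - ε ≤ μ.real (Ev b R' X H)) (hX : X ⊆ R) (hH : ∀ y ∈ H, y ∉ R)
    (hex : ∀ w w', w ∈ R → w' ∈ R' → w' ∉ R → adjZ2 w w' →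
      w ∈ Y1 ∨ w ∈ Y2 ∨ w ∈ Y3 ∨ w ∈ Y4) :
    t ≤ μ.real (Ev b R X Y1) ∨ t ≤ μ.real (Ev b R X Y2) ∨ t ≤ μ.real (Ev b R X Y3) ∨
        t ≤ μ.real (Ev b R X Y4) :=
  Th.four _ _ _ _ _ _ (h.trans (measureReal_mono (Ev_exit hX hH hex)))

/-- Gluing: two likely arms starting near the origin, the second one after a translation, are
connected to each other near the origin. -/
theorem Setup.pair {K : ℤ} {p : ℝ} {μ : Measure Conf} (S : Setup K p μ) {b : Bool} {t s ε : ℝ}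
    (Th : Thr μ b t s ε) {q M : ℤ} (hW : 1 - ε ≤ μ.real (Wired b q M))
    {R R1 R2 X Y1 Y2 Y2' : Set (ℤ × ℤ)} (m n : ℤ) (hR1 : R1 ⊆ R)
    (hR2 : ∀ z ∈ R2, z + (K * m, K * n) ∈ R) (hX : X ⊆ Lam q)
    (hX' : ∀ z ∈ X, z + (K * m, K * n) ∈ Lam q) (hM : Lam M ⊆ R)
    (hY2 : ∀ z ∈ Y2, z + (K * m, K * n) ∈ Y2')
    (h1 : t ≤ μ.real (Ev b R1 X Y1)) (h2 : t ≤ μ.real (Ev b R2 X Y2)) :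
    s - ε ≤ μ.real (Ev b R Y1 Y2') := by
  have := S.prob
  have k1 : t ≤ μ.real (Ev b R (Lam q) Y1) :=
    h1.trans (measureReal_mono (Ev_mono hR1 hX subset_rfl))
  have k2 : t ≤ μ.real (Ev b R (Lam q) Y2') := h2.trans (S.shift_le m n hR2 hX' hY2)
  have k := Th.two _ _ _ _ _ _ k1 k2
  have hsub : Wired b q M ∩ (Ev b R (Lam q) Y1 ∩ Ev b R (Lam q) Y2') ⊆ Ev b R Y1 Y2' := by
    rintro ω ⟨hw, ⟨x, hx, y, hy, h⟩, ⟨x', hx', y', hy', h'⟩⟩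
    exact ⟨y, hy, y', hy', (h.symm.trans ((hw x hx x' hx' h.1.2 h'.1.2).mono hM)).trans h'⟩
  have e := measureReal_union_add_inter (μ := μ) (s := Wired b q M)
    (t := Ev b R (Lam q) Y1 ∩ Ev b R (Lam q) Y2')
    ((measurableSet_Ev _ _ _ _).inter (measurableSet_Ev _ _ _ _))
  have e1 : μ.real (Wired b q M ∪ Ev b R (Lam q) Y1 ∩ Ev b R (Lam q) Y2') ≤ 1 :=
    measureReal_le_one
  have e2 := measureReal_mono (μ := μ) hsub
  linarith

/-- The rectangle `[0, K A] × [0, K B]` is crossed from left to right. -/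
def HCross (K : ℤ) (b : Bool) (A B : ℤ) : Set Conf :=
  Ev b (Box 0 (K * A) 0 (K * B)) {x | x.1 = 0} {x | x.1 = K * A}

/-- The rectangle `[0, K A] × [0, K B]` is crossed from bottom to top. -/
def VCross (K : ℤ) (b : Bool) (A B : ℤ) : Set Conf :=
  Ev b (Box 0 (K * A) 0 (K * B)) {x | x.2 = 0} {x | x.2 = K * B}

theorem Ev_comm (b : Bool) (R X Y : Set (ℤ × ℤ)) : Ev b R X Y = Ev b R Y X := by
  ext ω
  constructor <;> exact fun ⟨x, hx, y, hy, h⟩ => ⟨y, hy, x, hx, h.symm⟩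

/-! ### Crossings of large rectangles -/

/-- For each colour, large rectangles are crossed in one of the two directions; moreover a
left-to-right crossing can be obtained at two consecutive widths simultaneously. The origin is
placed at all positions of `K ℤ²` in the rectangle, and `exists_opposite_pair` is applied to the
sides which are likely to be reached from a fixed large square around it. -/
theorem Setup.cross {K : ℤ} {p : ℝ} {μ : Measure Conf} (S : Setup K p μ) {b : Bool} {t s ε : ℝ}
    (Th : Thr μ b t s ε) : ∃ A0 B0 : ℤ, 0 ≤ A0 ∧ 0 ≤ B0 ∧ ∀ A B, A0 ≤ A → B0 ≤ B →
      s - ε ≤ μ.real (VCross K b A B) ∨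
        (s - ε ≤ μ.real (HCross K b A B) ∧ s - ε ≤ μ.real (HCross K b (A + 1) B)) := by
  have := S.prob
  have hε := Th.ε_pos
  have hK := S.hK
  have hm : ∀ x y : ℤ, x ≤ y → K * x ≤ K * y := fun x y h =>
    mul_le_mul_of_nonneg_left h (by omega)
  have hx : ∀ x : ℤ, 0 ≤ x → x ≤ K * x := fun x h => le_mul_of_one_le_left h hK
  -- `Λ_n` meets colour `b` with high probability.
  obtain ⟨n, hn, hn0⟩ : ∃ n : ℤ, 1 - ε / 2 ≤ μ.real {ω | ∃ x ∈ Lam n, ω x = b} ∧ 0 ≤ n := by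
    have h : ∀ᶠ n in Filter.atTop, 1 - ε / 2 ≤ μ.real {ω | ∃ x ∈ Lam n, ω x = b} := by
      refine eventually_real_ge (E := Set.univ) ?_ (by simp; linarith)
      filter_upwards [S.nice] with ω hω _
      obtain ⟨x, hx⟩ := (hω b).1
      obtain ⟨N, hN⟩ := exists_mem_Lam x
      filter_upwards [Filter.eventually_ge_atTop (N : ℤ)] with m hm
      exact ⟨x, hN m hm, hx⟩
    exact (h.and (Filter.eventually_ge_atTop 0)).exists
  have hn' : 1 - ε < μ.real {ω | ∃ x ∈ Lam n, ω x = b} := by linarith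
  obtain ⟨M, hM, hMn⟩ := ((S.eventually_wired b (n + 2 * K) (c := 1 - ε) (by linarith)).and
    (Filter.eventually_ge_atTop (n + 2 * K))).exists
  have side1 : ∀ N : ℤ, ∀ᶠ m in Filter.atTop, 1 - ε ≤ μ.real (Ev b (Lam m) (Lam n) {x | N ≤ x.1}) :=
    fun N => S.eventually_joined b hn' ((S.ae_sides b).mono fun ω h => (h N).1)
  have side2 : ∀ N : ℤ, ∀ᶠ m in Filter.atTop,
      1 - ε ≤ μ.real (Ev b (Lam m) (Lam n) {x | x.1 ≤ -N}) :=
    fun N => S.eventually_joined b hn' ((S.ae_sides b).mono fun ω h => (h N).2.1)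
  have side3 : ∀ N : ℤ, ∀ᶠ m in Filter.atTop, 1 - ε ≤ μ.real (Ev b (Lam m) (Lam n) {x | N ≤ x.2}) :=
    fun N => S.eventually_joined b hn' ((S.ae_sides b).mono fun ω h => (h N).2.2.1)
  have side4 : ∀ N : ℤ, ∀ᶠ m in Filter.atTop,
      1 - ε ≤ μ.real (Ev b (Lam m) (Lam n) {x | x.2 ≤ -N}) :=
    fun N => S.eventually_joined b hn' ((S.ae_sides b).mono fun ω h => (h N).2.2.2)
  obtain ⟨M1, ⟨hu, hd⟩, hM1⟩ := (((side3 (K * M + 1)).and (side4 (K * M + 1))).and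
    (Filter.eventually_ge_atTop M)).exists
  obtain ⟨M2, ⟨hr, hl⟩, hM2⟩ := (((side1 (K * M1 + 1)).and (side2 (K * M1 + 1))).and
    (Filter.eventually_ge_atTop M1)).exists
  refine ⟨2 * M1 + M2, 2 * M + M1, by omega, by omega, fun A B hA hB => ?_⟩
  obtain ⟨M3, hr'⟩ := (side1 (K * A + 1)).exists
  let R : ℤ → ℤ → Set (ℤ × ℤ) := fun i j => Box (-(K * i)) (K * (A - i)) (-(K * j)) (K * (B - j))
  -- Squares contained in the rectangles.
  have hsub : ∀ i j m, m ≤ K * i → m ≤ K * (A - i) → m ≤ K * j → m ≤ K * (B - j) →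
      Lam m ⊆ R i j := by
    rintro i j m h1 h2 h3 h4 x ⟨⟨_, _⟩, _, _⟩
    exact ⟨⟨by omega, by omega⟩, by omega, by omega⟩
  have bd : ∀ i, M1 ≤ i → i ≤ A - M1 → M1 ≤ K * i ∧ M1 ≤ K * (A - i) := fun i h1 h2 =>
    ⟨h1.trans (hx i (by omega)), (by omega : M1 ≤ A - i).trans (hx _ (by omega))⟩
  have bd' : ∀ j, M ≤ j → j ≤ B - M → M ≤ K * j ∧ M ≤ K * (B - j) := fun i h1 h2 =>
    ⟨h1.trans (hx i (by omega)), (by omega : M ≤ B - i).trans (hx _ (by omega))⟩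
  have hsubM : ∀ i j, M1 ≤ i → i ≤ A - M1 → M ≤ j → j ≤ B - M → Lam M ⊆ R i j := by
    intro i j h1 h2 h3 h4
    have := bd i h1 h2
    have := bd' j h3 h4
    exact hsub i j M (by omega) (by omega) (by omega) (by omega)
  have hsubn : ∀ i j, M1 ≤ i → i ≤ A - M1 → M ≤ j → j ≤ B - M → Lam n ⊆ R i j :=
    fun i j h1 h2 h3 h4 => (Lam_mono (by omega)).trans (hsubM i j h1 h2 h3 h4)
  have comb := exists_opposite_pair
    (fun i j => t ≤ μ.real (Ev b (R i j) (Lam n) {x | x.2 = K * (B - j)}))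
    (fun i j => t ≤ μ.real (Ev b (R i j) (Lam n) {x | x.2 = -(K * j)}))
    (fun i j => t ≤ μ.real (Ev b (R i j) (Lam n) {x | x.1 = -(K * i)}))
    (fun i j => t ≤ μ.real (Ev b (R i j) (Lam n) {x | x.1 = K * (A - i)}))
    M1 (A - M1) M (B - M) (by omega) (by omega)
    (by
      intro i h1 h2
      have b1 := bd i h1 h2
      have b2 : M1 ≤ K * (B - M) := (by omega : M1 ≤ B - M).trans (hx _ (by omega))
      have := Th.exit (Y1 := {x | x.2 = -(K * M)}) (Y2 := {x | x.2 = -(K * M)})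
        (Y3 := {x | x.2 = -(K * M)}) (Y4 := {x | x.2 = -(K * M)}) hd
        (hsubn i M h1 h2 le_rfl (by omega)) (fun y hy hy' => by
          simp only [R, Box, Set.mem_ofPred_eq] at hy hy'
          omega) (fun w w' h3 h4 h5 h6 => by
          have := adjZ2_cases h6
          simp only [R, Box, Lam, Set.mem_ofPred_eq] at h3 h4 h5 ⊢
          omega)
      simpa using this)
    (by
      intro i h1 h2
      have b1 := bd i h1 h2
      have b2 : M1 ≤ K * (B - M) := (by omega : M1 ≤ B - M).trans (hx _ (by omega))
      have e : B - (B - M) = M := by ring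
      have := Th.exit (Y1 := {x | x.2 = K * (B - (B - M))}) (Y2 := {x | x.2 = K * (B - (B - M))})
        (Y3 := {x | x.2 = K * (B - (B - M))}) (Y4 := {x | x.2 = K * (B - (B - M))}) hu
        (hsubn i (B - M) h1 h2 (by omega) (by omega)) (fun y hy hy' => by
          simp only [R, Box, Set.mem_ofPred_eq] at hy hy'
          rw [e] at hy'
          omega) (fun w w' h3 h4 h5 h6 => by
          have := adjZ2_cases h6
          simp only [R, Box, Lam, Set.mem_ofPred_eq] at h3 h4 h5 ⊢
          rw [e] at h3 h5 ⊢
          omega)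
      simpa using this)
    (by
      intro i j h1 h2 h3 h4 hT
      refine hT.trans (measureReal_mono ?_)
      have m1 := hm (B - (j + 1)) (B - j) (by omega)
      have m2 := hm j (j + 1) (by omega)
      have m3 : K * (B - j) = K * (B - (j + 1)) + K := by ring
      have := Ev_exit (b := b) (R' := R i j) (H := {x | x.2 = K * (B - j)})
        (Y1 := {x | x.2 = K * (B - (j + 1))}) (Y2 := {x | x.2 = K * (B - (j + 1))})
        (Y3 := {x | x.2 = K * (B - (j + 1))}) (Y4 := {x | x.2 = K * (B - (j + 1))})
        (hsubn i (j + 1) h1 h2 (by omega) (by omega)) (fun y hy hy' => by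
          simp only [R, Box, Set.mem_ofPred_eq] at hy hy'
          omega) (fun w w' h3 h4 h5 h6 => by
          have := adjZ2_cases h6
          simp only [R, Box, Set.mem_ofPred_eq] at h3 h4 h5 ⊢
          omega)
      simpa using this)
    (by
      intro i j h1 h2 h3 h4 hT
      refine hT.trans (measureReal_mono ?_)
      have m1 := hm (B - (j + 1)) (B - j) (by omega)
      have m2 := hm j (j + 1) (by omega)
      have m3 : K * (j + 1) = K * j + K := by ring
      have := Ev_exit (b := b) (R' := R i (j + 1)) (H := {x | x.2 = -(K * (j + 1))})
        (Y1 := {x | x.2 = -(K * j)}) (Y2 := {x | x.2 = -(K * j)})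
        (Y3 := {x | x.2 = -(K * j)}) (Y4 := {x | x.2 = -(K * j)})
        (hsubn i j h1 h2 (by omega) (by omega)) (fun y hy hy' => by
          simp only [R, Box, Set.mem_ofPred_eq] at hy hy'
          omega) (fun w w' h3 h4 h5 h6 => by
          have := adjZ2_cases h6
          simp only [R, Box, Set.mem_ofPred_eq] at h3 h4 h5 ⊢
          omega)
      simpa using this)
    (by
      intro i j h1 h2 h3 h4
      have m1 := hm (A - i) A (by omega)
      exact Th.exit hr' (hsubn i j h1 h2 h3 h4) (fun y hy hy' => by
          simp only [R, Box, Set.mem_ofPred_eq] at hy hy'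
          omega) (fun w w' h3 h4 h5 h6 => by
          have := adjZ2_cases h6
          simp only [R, Box, Set.mem_ofPred_eq] at h3 h4 h5 ⊢
          omega))
    (by
      intro j h3 h4
      have b2 : M2 ≤ K * (A - M1) := (by omega : M2 ≤ A - M1).trans (hx _ (by omega))
      have := Th.exit (Y1 := {x | x.2 = K * (B - j)}) (Y2 := {x | x.2 = -(K * j)})
        (Y3 := {x | x.1 = -(K * M1)}) (Y4 := {x | x.1 = -(K * M1)}) hl
        (hsubn M1 j le_rfl (by omega) h3 h4) (fun y hy hy' => by
          simp only [R, Box, Set.mem_ofPred_eq] at hy hy'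
          omega) (fun w w' h3 h4 h5 h6 => by
          have := adjZ2_cases h6
          simp only [R, Box, Lam, Set.mem_ofPred_eq] at h3 h4 h5 ⊢
          omega)
      simpa using this)
    (by
      intro j h3 h4
      have b2 : M2 ≤ K * (A - M1) := (by omega : M2 ≤ A - M1).trans (hx _ (by omega))
      have e : A - (A - M1) = M1 := by ring
      have := Th.exit (Y1 := {x | x.2 = K * (B - j)}) (Y2 := {x | x.2 = -(K * j)})
        (Y3 := {x | x.1 = K * (A - (A - M1))}) (Y4 := {x | x.1 = K * (A - (A - M1))}) hr
        (hsubn (A - M1) j (by omega) le_rfl h3 h4) (fun y hy hy' => by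
          simp only [R, Box, Set.mem_ofPred_eq] at hy hy'
          rw [e] at hy'
          omega) (fun w w' h3 h4 h5 h6 => by
          have := adjZ2_cases h6
          simp only [R, Box, Lam, Set.mem_ofPred_eq] at h3 h4 h5 ⊢
          rw [e] at h3 h5 ⊢
          omega)
      simpa using this)
  obtain ⟨i, j, i', j', ⟨i1, i2, j1, j2⟩, ⟨i1', i2', j1', j2'⟩, ⟨c1, c2, c3, c4⟩, h⟩ := comb
  have d1 := hm (i' - i) 1 (by omega)
  have d2 := hm (-1) (i' - i) (by omega)
  have d3 := hm (j' - j) 1 (by omega)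
  have d4 := hm (-1) (j' - j) (by omega)
  have f1 : K * (i' - i) = K * i' - K * i := by ring
  have f2 : K * (j' - j) = K * j' - K * j := by ring
  have f3 : K * (A - i) = K * A - K * i := by ring
  have f4 : K * (A - i') = K * A - K * i' := by ring
  have f5 : K * (B - j) = K * B - K * j := by ring
  have f6 : K * (B - j') = K * B - K * j' := by ring
  have f7 : K * (i' - i + 1) = K * i' - K * i + K := by ring
  have f8 : K * (A + 1) = K * A + K := by ring
  have hXn : Lam n ⊆ Lam (n + 2 * K) := Lam_mono (by omega)
  rcases h with ⟨h1, h2⟩ | ⟨h1, h2⟩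
  · left
    have := S.pair Th hM (R := R i j) (Y2' := {x | x.2 = -(K * j)}) (i' - i) (j' - j) subset_rfl
      (by
        intro z hz
        simp only [R, Box, Set.mem_ofPred_eq, Prod.fst_add, Prod.snd_add] at hz ⊢
        omega) hXn
      (by
        intro z hz
        simp only [Lam, Set.mem_ofPred_eq, Prod.fst_add, Prod.snd_add] at hz ⊢
        omega) (hsubM i j i1 i2 j1 j2)
      (by
        intro z hz
        simp only [Set.mem_ofPred_eq, Prod.snd_add] at hz ⊢
        omega) h1 h2
    rw [Ev_comm] at this
    refine this.trans (S.shift_le i j ?_ ?_ ?_)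
    all_goals
      intro z hz
      simp only [R, Box, Set.mem_ofPred_eq, Prod.fst_add, Prod.snd_add] at hz ⊢
      omega
  · right
    constructor
    · have := S.pair Th hM (R := R i j) (Y2' := {x | x.1 = K * (A - i)}) (i' - i) (j' - j)
        subset_rfl
        (by
          intro z hz
          simp only [R, Box, Set.mem_ofPred_eq, Prod.fst_add, Prod.snd_add] at hz ⊢
          omega) hXn
        (by
          intro z hz
          simp only [Lam, Set.mem_ofPred_eq, Prod.fst_add, Prod.snd_add] at hz ⊢
          omega) (hsubM i j i1 i2 j1 j2)
        (by
          intro z hz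
          simp only [Set.mem_ofPred_eq, Prod.fst_add] at hz ⊢
          omega) h1 h2
      refine this.trans (S.shift_le i j ?_ ?_ ?_)
      all_goals
        intro z hz
        simp only [R, Box, Set.mem_ofPred_eq, Prod.fst_add, Prod.snd_add] at hz ⊢
        omega
    · -- One extra period in the translation of the second arm widens the rectangle by `K`.
      have hR : R i j ⊆ Box (-(K * i)) (K * (A - i) + K) (-(K * j)) (K * (B - j)) := by
        intro z hz
        simp only [R, Box, Set.mem_ofPred_eq] at hz ⊢
        omega
      have := S.pair Th hM (Y2' := {x | x.1 = K * (A - i) + K}) (i' - i + 1) (j' - j) hR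
        (by
          intro z hz
          simp only [R, Box, Set.mem_ofPred_eq, Prod.fst_add, Prod.snd_add] at hz ⊢
          omega) hXn
        (by
          intro z hz
          simp only [Lam, Set.mem_ofPred_eq, Prod.fst_add, Prod.snd_add] at hz ⊢
          omega) ((hsubM i j i1 i2 j1 j2).trans hR)
        (by
          intro z hz
          simp only [Set.mem_ofPred_eq, Prod.fst_add] at hz ⊢
          omega) h1 h2
      refine this.trans (S.shift_le i j ?_ ?_ ?_)
      all_goals
        intro z hz
        simp only [Box, Set.mem_ofPred_eq, Prod.fst_add, Prod.snd_add] at hz ⊢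
        omega

/-! ### The FKG inequality and the final contradiction -/

theorem increasing_inter {A B : Set Conf} (hA : IncreasingEvent A) (hB : IncreasingEvent B) :
    IncreasingEvent (A ∩ B) :=
  fun _ _ h hω => ⟨hA h.1 hω, hB h.2 hω⟩

theorem Setup.thr_true {K : ℤ} {p : ℝ} {μ : Measure Conf} (S : Setup K p μ) :
    Thr μ true (1 / 5) (p / 25) (p ^ 3 * (p / 100) ^ 4) := by
  have := S.prob
  have hp := S.p_pos
  have hp1 := S.p_le
  refine ⟨by positivity, ?_, ?_⟩
  · intro R X Y1 Y2 Y3 Y4 h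
    by_contra! hcon
    obtain ⟨h1, h2, h3, h4⟩ := hcon
    have e1 := measureReal_union_le (μ := μ)
      (Ev true R X Y1 ∪ Ev true R X Y2 ∪ Ev true R X Y3) (Ev true R X Y4)
    have e2 := measureReal_union_le (μ := μ) (Ev true R X Y1 ∪ Ev true R X Y2) (Ev true R X Y3)
    have e3 := measureReal_union_le (μ := μ) (Ev true R X Y1) (Ev true R X Y2)
    have q1 : p ^ 3 ≤ 1 := pow_le_one₀ hp.le hp1
    have q2 : (p / 100) ^ 4 ≤ (1 / 100) ^ 4 := by gcongr
    have q3 : p ^ 3 * (p / 100) ^ 4 ≤ 1 * (1 / 100) ^ 4 := by gcongr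
    norm_num at q3
    linarith
  · intro R X Y R' X' Y' h1 h2
    have e := S.fkg _ _ (measurableSet_Ev true R X Y) (measurableSet_Ev true R' X' Y')
      (increasing_Ev_true _ _ _) (increasing_Ev_true _ _ _)
    refine le_trans ?_ e
    calc p / 25 = p * (1 / 5) * (1 / 5) := by ring
      _ ≤ _ := by gcongr

/-- For the complement, the square-root trick: the intersection of four increasing complements has
probability at least `p³` times the product of their probabilities. -/
theorem Setup.thr_false {K : ℤ} {p : ℝ} {μ : Measure Conf} (S : Setup K p μ) :
    Thr μ false (1 - p / 100) (1 - 2 * (p / 100)) (p ^ 3 * (p / 100) ^ 4) := by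
  have := S.prob
  have hp := S.p_pos
  have hp1 := S.p_le
  refine ⟨by positivity, ?_, ?_⟩
  · intro R X Y1 Y2 Y3 Y4 h
    by_contra! hcon
    have mE : ∀ Y, MeasurableSet (Ev false R X Y)ᶜ := fun Y => (measurableSet_Ev _ _ _ _).compl
    have iE : ∀ Y, IncreasingEvent (Ev false R X Y)ᶜ := fun Y => increasing_Ev_false _ _ _
    have big : ∀ Y, μ.real (Ev false R X Y) < 1 - p / 100 → p / 100 < μ.real (Ev false R X Y)ᶜ := by
      intro Y hY
      rw [probReal_compl_eq_one_sub (measurableSet_Ev _ _ _ _)]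
      linarith
    have b1 := big _ hcon.1
    have b2 := big _ hcon.2.1
    have b3 := big _ hcon.2.2.1
    have b4 := big _ hcon.2.2.2
    have e1 := S.fkg _ _ (mE Y1) (mE Y2) (iE Y1) (iE Y2)
    have e2 := S.fkg _ _ ((mE Y1).inter (mE Y2)) (mE Y3) (increasing_inter (iE Y1) (iE Y2)) (iE Y3)
    have e3 := S.fkg _ _ (((mE Y1).inter (mE Y2)).inter (mE Y3)) (mE Y4)
      (increasing_inter (increasing_inter (iE Y1) (iE Y2)) (iE Y3)) (iE Y4)
    have e4 : μ.real (Ev false R X Y1 ∪ Ev false R X Y2 ∪ Ev false R X Y3 ∪ Ev false R X Y4) =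
        1 - μ.real ((Ev false R X Y1)ᶜ ∩ (Ev false R X Y2)ᶜ ∩ (Ev false R X Y3)ᶜ ∩
          (Ev false R X Y4)ᶜ) := by
      rw [← Set.compl_union, ← Set.compl_union, ← Set.compl_union, probReal_compl_eq_one_sub]
      · ring
      · exact (((measurableSet_Ev _ _ _ _).union (measurableSet_Ev _ _ _ _)).union
          (measurableSet_Ev _ _ _ _)).union (measurableSet_Ev _ _ _ _)
    have hτ : 0 < p / 100 := by positivity
    have c1 : p * (p / 100) * (p / 100) ≤ μ.real ((Ev false R X Y1)ᶜ ∩ (Ev false R X Y2)ᶜ) :=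
      le_trans (by gcongr) e1
    have c2 : p * (p * (p / 100) * (p / 100)) * (p / 100) ≤
        μ.real ((Ev false R X Y1)ᶜ ∩ (Ev false R X Y2)ᶜ ∩ (Ev false R X Y3)ᶜ) :=
      le_trans (by gcongr) e2
    have c3 : p * (p * (p * (p / 100) * (p / 100)) * (p / 100)) * (p / 100) <
        μ.real ((Ev false R X Y1)ᶜ ∩ (Ev false R X Y2)ᶜ ∩ (Ev false R X Y3)ᶜ ∩
          (Ev false R X Y4)ᶜ) :=
      calc p * (p * (p * (p / 100) * (p / 100)) * (p / 100)) * (p / 100) ≤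
            p * μ.real ((Ev false R X Y1)ᶜ ∩ (Ev false R X Y2)ᶜ ∩ (Ev false R X Y3)ᶜ) *
              (p / 100) := by gcongr
        _ < p * μ.real ((Ev false R X Y1)ᶜ ∩ (Ev false R X Y2)ᶜ ∩ (Ev false R X Y3)ᶜ) *
              μ.real (Ev false R X Y4)ᶜ :=
          mul_lt_mul_of_pos_left b4 (mul_pos hp (lt_of_lt_of_le (by positivity) c2))
        _ ≤ _ := e3
    have c4 : p * (p * (p * (p / 100) * (p / 100)) * (p / 100)) * (p / 100) =
        p ^ 3 * (p / 100) ^ 4 := by ring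
    linarith
  · intro R X Y R' X' Y' h1 h2
    have e := measureReal_union_add_inter (μ := μ) (s := Ev false R X Y) (t := Ev false R' X' Y')
      (measurableSet_Ev _ _ _ _)
    have e1 : μ.real (Ev false R X Y ∪ Ev false R' X' Y') ≤ 1 := measureReal_le_one
    linarith

theorem prob_add_le_one {μ : Measure Conf} [IsProbabilityMeasure μ] {E F : Set Conf}
    (hF : MeasurableSet F) (h : ∀ ω, ω ∈ E → ω ∈ F → False) : μ.real E + μ.real F ≤ 1 := by
  rw [← measureReal_union (Set.disjoint_left.2 fun ω h1 h2 => h ω h1 h2) hF]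
  exact measureReal_le_one

/-- A tall rectangle of fixed width is unlikely to be crossed vertically by the complement, since
`Γ` contains a path joining the two sides of the strip. -/
theorem Setup.strip_vert {K : ℤ} {p : ℝ} {μ : Measure Conf} (S : Setup K p μ) (A B1 : ℤ) {η : ℝ}
    (hη : 0 < η) : ∃ B, B1 ≤ B ∧ μ.real (VCross K false A B) ≤ η := by
  have := S.prob
  have hK := S.hK
  have h1 : ∀ᶠ m in Filter.atTop,
      1 - η ≤ μ.real (Ev true (Lam m) {x | x.1 ≤ -0} {x | K * A ≤ x.1}) := by
    refine S.eventually_joined true ?_ ((S.ae_sides true).mono fun ω h => (h (K * A)).1)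
    have : μ.real {ω : Conf | ∃ x ∈ {x : ℤ × ℤ | x.1 ≤ -0}, ω x = true} = 1 := by
      rw [measureReal_congr (t := Set.univ)]
      · simp
      · exact Filter.eventuallyEq_univ.2 ((S.ae_sides true).mono fun ω h => (h 0).2.1)
    linarith
  obtain ⟨N, hN⟩ := Filter.eventually_atTop.1 h1
  let j : ℤ := N.natAbs + B1.natAbs
  have hj : j ≤ K * j := le_mul_of_one_le_left (by omega) hK
  have h2 := hN (K * j) (by omega)
  refine ⟨2 * j, by omega, ?_⟩
  have h3 : μ.real (VCross K false A (2 * j)) ≤ μ.real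
      (Ev false (Box 0 (K * A) (-(K * j)) (K * j)) {x | x.2 = -(K * j)} {x | x.2 = K * j}) := by
    have e : K * (2 * j) = K * j + K * j := by ring
    have e' : K * (-j) = -(K * j) := by ring
    refine S.shift_le 0 (-j) ?_ ?_ ?_
    all_goals
      intro z hz
      simp only [Box, Set.mem_ofPred_eq, Prod.fst_add, Prod.snd_add, mul_zero, e, e'] at hz ⊢
      omega
  have h4 := prob_add_le_one (μ := μ) (E := Ev false (Box 0 (K * A) (-(K * j)) (K * j))
    {x | x.2 = -(K * j)} {x | x.2 = K * j}) (measurableSet_Ev true (Lam (K * j)) {x | x.1 ≤ -0}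
    {x | K * A ≤ x.1}) (by
      rintro ω ⟨x, hx, y, hy, h⟩ ⟨x', hx', y', hy', h'⟩
      exact no_cross (by simp) (fun z hz => hz.1) (fun z hz => hz.2) h h' hx.le hy.ge
        (by simpa using hx') hy')
  linarith

theorem Setup.strip_horiz {K : ℤ} {p : ℝ} {μ : Measure Conf} (S : Setup K p μ) (B A1 : ℤ) {η : ℝ}
    (hη : 0 < η) : ∃ A, A1 ≤ A ∧ μ.real (HCross K false A B) ≤ η := by
  have := S.prob
  have hK := S.hK
  have h1 : ∀ᶠ m in Filter.atTop,
      1 - η ≤ μ.real (Ev true (Lam m) {x | x.2 ≤ -0} {x | K * B ≤ x.2}) := by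
    refine S.eventually_joined true ?_ ((S.ae_sides true).mono fun ω h => (h (K * B)).2.2.1)
    have : μ.real {ω : Conf | ∃ x ∈ {x : ℤ × ℤ | x.2 ≤ -0}, ω x = true} = 1 := by
      rw [measureReal_congr (t := Set.univ)]
      · simp
      · exact Filter.eventuallyEq_univ.2 ((S.ae_sides true).mono fun ω h => (h 0).2.2.2)
    linarith
  obtain ⟨N, hN⟩ := Filter.eventually_atTop.1 h1
  let j : ℤ := N.natAbs + A1.natAbs
  have hj : j ≤ K * j := le_mul_of_one_le_left (by omega) hK
  have h2 := hN (K * j) (by omega)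
  refine ⟨2 * j, by omega, ?_⟩
  have h3 : μ.real (HCross K false (2 * j) B) ≤ μ.real
      (Ev false (Box (-(K * j)) (K * j) 0 (K * B)) {x | x.1 = -(K * j)} {x | x.1 = K * j}) := by
    have e : K * (2 * j) = K * j + K * j := by ring
    have e' : K * (-j) = -(K * j) := by ring
    refine S.shift_le (-j) 0 ?_ ?_ ?_
    all_goals
      intro z hz
      simp only [Box, Set.mem_ofPred_eq, Prod.fst_add, Prod.snd_add, mul_zero, e, e'] at hz ⊢
      omega
  have h4 := prob_add_le_one (μ := μ) (E := Ev false (Box (-(K * j)) (K * j) 0 (K * B))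
    {x | x.1 = -(K * j)} {x | x.1 = K * j}) (measurableSet_Ev true (Lam (K * j)) {x | x.2 ≤ -0}
    {x | K * B ≤ x.2}) (by
      rintro ω ⟨x, hx, y, hy, h⟩ ⟨x', hx', y', hy', h'⟩
      exact no_cross (by simp) (fun z hz => hz.1) (fun z hz => hz.2) h' h
        (by simpa using hx') hy' hx.le hy.ge)
  linarith

theorem no_VH {K : ℤ} {b b' : Bool} (hb : b ≠ b') {A B : ℤ} (ω : Conf) (h : ω ∈ VCross K b A B)
    (h' : ω ∈ HCross K b' A B) : False := by
  obtain ⟨x, hx, y, hy, h⟩ := h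
  obtain ⟨x', hx', y', hy', h'⟩ := h'
  exact no_cross hb (fun z hz => hz.1) (fun z hz => hz.2) h h' hx.le hy.ge hx'.le hy'.ge

/-- With the height fixed, at the least width for which the complement is very likely to cross
vertically it is also very likely to cross horizontally, which leaves no room for crossings
by `Γ`. -/
theorem Setup.contradiction {K : ℤ} {p : ℝ} {μ : Measure Conf} (S : Setup K p μ) : False := by
  have := S.prob
  have hp := S.p_pos
  have hp1 := S.p_le
  obtain ⟨A1, B1, hA1, hB1, hF⟩ := S.cross S.thr_false
  obtain ⟨A2, B2, hA2, hB2, hT⟩ := S.cross S.thr_true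
  have hε : p ^ 3 * (p / 100) ^ 4 < p / 100 := by
    have q1 : p ^ 3 ≤ 1 := pow_le_one₀ hp.le hp1
    have q2 : (p / 100) ^ 3 ≤ (1 / 100) ^ 3 := by gcongr
    calc p ^ 3 * (p / 100) ^ 4 = p ^ 3 * (p / 100) ^ 3 * (p / 100) := by ring
      _ ≤ 1 * (1 / 100) ^ 3 * (p / 100) := by gcongr
      _ < p / 100 := by linarith
  generalize p ^ 3 * (p / 100) ^ 4 = ε at *
  obtain ⟨B, hB, hBV⟩ := S.strip_vert (max A1 A2) (max B1 B2) (η := 1 / 2) (by norm_num)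
  obtain ⟨A', hA', hAH⟩ := S.strip_horiz B (max A1 A2) (η := 1 / 2) (by norm_num)
  have hBB := max_le_iff.1 hB
  have hAA := max_le_iff.1 hA'
  have hex : ∃ n : ℕ, 1 - 2 * (p / 100) - ε ≤ μ.real (VCross K false (max A1 A2 + n) B) := by
    obtain ⟨n, hn⟩ := Int.le.dest hA'
    refine ⟨n, ?_⟩
    rw [hn]
    rcases hF A' B hAA.1 hBB.1 with h | h
    · exact h
    · linarith [h.1]
  classical
  have hn := Nat.find_spec hex
  have hmin := fun m => Nat.find_min hex (m := m)
  generalize Nat.find hex = n at hn hmin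
  cases n with
  | zero =>
    simp only [Nat.cast_zero, add_zero] at hn
    linarith
  | succ n =>
    have h1 := hmin n (Nat.lt_succ_self n)
    have l1 := le_max_left A1 A2
    have l2 := le_max_right A1 A2
    have e : max A1 A2 + ((n + 1 : ℕ) : ℤ) = max A1 A2 + n + 1 := by push_cast; ring
    rw [e] at hn
    have h2 := ((hF (max A1 A2 + n) B (by omega) hBB.1).resolve_left h1).2
    have d1 := prob_add_le_one (μ := μ) (measurableSet_Ev _ _ _ _)
      (no_VH (K := K) (b := true) (b' := false) (by simp) (A := max A1 A2 + n + 1) (B := B))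
    have d2 := prob_add_le_one (μ := μ) (measurableSet_Ev _ _ _ _)
      (no_VH (K := K) (b := false) (b' := true) (by simp) (A := max A1 A2 + n + 1) (B := B))
    rw [← HCross] at d1 d2
    rcases hT (max A1 A2 + n + 1) B (by omega) hBB.2 with h | h
    · linarith
    · linarith [h.1]

/-! ### Conditioning on the good event -/

/-- Conditioning on `GoodEvent` costs a factor `ρ GoodEvent` in the FKG inequality, because an
increasing event intersected with `{Γ ≠ ∅}` is still increasing and, up to a null set, is contained
in `GoodEvent`. -/
theorem setup_cond {k : ℕ} (hk : 1 ≤ k) {ρ : Measure Conf} (hprob : IsProbabilityMeasure ρ)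
    (hfkg : SatisfiesFKG ρ) (hρ : ρ ({ω : Conf | ∀ x, ω x = false} ∪ GoodEvent) = 1)
    (hpos : 0 < ρ GoodEvent)
    (hinv : ∀ m n : ℤ, (ProbabilityTheory.cond ρ GoodEvent).map
      (translateConf ((k : ℤ) * m, (k : ℤ) * n)) = ProbabilityTheory.cond ρ GoodEvent) :
    Setup k (ρ.real GoodEvent) (ProbabilityTheory.cond ρ GoodEvent) := by
  have hg : 0 < ρ.real GoodEvent := ENNReal.toReal_pos hpos.ne' (measure_ne_top _ _)
  have hreal : ∀ A, (ProbabilityTheory.cond ρ GoodEvent).real A =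
      (ρ.real GoodEvent)⁻¹ * ρ.real (GoodEvent ∩ A) := fun A => by
    simp only [Measure.real, ProbabilityTheory.cond_apply measurableSet_goodEvent,
      ENNReal.toReal_mul, ENNReal.toReal_inv]
  -- `N` cuts out the empty configuration, so that `A ∩ N` agrees with `GoodEvent ∩ A` a.s.
  let N : Set Conf := {ω | ∃ x, ω x = true}
  have hN : MeasurableSet N := by
    have : N = ⋃ x, {ω : Conf | ω x = true} := by
      ext ω
      simp [N]
    rw [this]
    exact MeasurableSet.iUnion fun x => measurableSet_color true x
  have iN : IncreasingEvent N := by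
    rintro ω ω' ⟨x, hx⟩ h
    refine ⟨x, ?_⟩
    have := h x
    rw [hx] at this
    exact top_le_iff.1 this
  have hae : ∀ᵐ ω ∂ρ, ω ∈ {ω : Conf | ∀ x, ω x = false} ∪ GoodEvent := by
    have hm : MeasurableSet ({ω : Conf | ∀ x, ω x = false} ∪ GoodEvent) := by
      refine MeasurableSet.union ?_ measurableSet_goodEvent
      have : {ω : Conf | ∀ x, ω x = false} = ⋂ x, {ω : Conf | ω x = false} := by
        ext ω
        simp
      rw [this]
      exact MeasurableSet.iInter fun x => measurableSet_color false x
    exact (prob_compl_eq_zero_iff hm).2 hρ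
  have hcut : ∀ A, ρ.real (A ∩ N) = ρ.real (GoodEvent ∩ A) := fun A => by
    refine measureReal_congr ?_
    filter_upwards [hae] with ω hω
    refine propext ⟨fun ⟨hA, x, hx⟩ => ⟨hω.resolve_left fun h => ?_, hA⟩, fun ⟨hG, hA⟩ =>
      ⟨hA, hG.1.nonempty⟩⟩
    rw [h x] at hx
    exact absurd hx (by simp)
  refine ⟨ProbabilityTheory.cond_isProbabilityMeasure hpos.ne', by exact_mod_cast hk, hg,
    measureReal_le_one, ?_, hinv, ?_⟩
  · filter_upwards [ProbabilityTheory.ae_cond_mem measurableSet_goodEvent] with ω hω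
    exact nice_of_mem_goodEvent hω
  · intro A B hA hB iA iB
    have h := ENNReal.toReal_mono (measure_ne_top ρ _)
      (hfkg _ _ (hA.inter hN) (hB.inter hN) (increasing_inter iA iN) (increasing_inter iB iN))
    rw [ENNReal.toReal_mul, ← Set.inter_inter_distrib_right] at h
    change ρ.real (A ∩ N) * ρ.real (B ∩ N) ≤ ρ.real (A ∩ B ∩ N) at h
    rw [hcut, hcut, hcut] at h
    rw [hreal, hreal, hreal]
    calc ρ.real GoodEvent * ((ρ.real GoodEvent)⁻¹ * ρ.real (GoodEvent ∩ A)) *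
          ((ρ.real GoodEvent)⁻¹ * ρ.real (GoodEvent ∩ B)) =
        (ρ.real GoodEvent)⁻¹ * (ρ.real (GoodEvent ∩ A) * ρ.real (GoodEvent ∩ B)) := by
          field_simp
      _ ≤ _ := mul_le_mul_of_nonneg_left h (inv_nonneg.2 hg.le)

/-- There is no probability measure `ρ` on subsets `Γ` of `ℤ²` such that:
(1) `ρ` satisfies the FKG inequality; (2) `ρ`-a.s. either `Γ = ∅` or both `Γ` and `ℤ² ∖ Γ`
are infinite and connected, the latter event having positive probability; and (3) the
conditional law of `Γ` given the latter event is invariant under `Γ ↦ Γ + v` for all `v`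
in the full-rank sublattice `L` of `ℤ²`. -/
theorem no_fkg_invariant_two_sided_measure
    (L : AddSubgroup (ℤ × ℤ)) (k : ℕ) (hk : 1 ≤ k) (hL : ∀ x : ℤ × ℤ, (k : ℤ) • x ∈ L) :
    ¬ ∃ ρ : Measure Conf, IsProbabilityMeasure ρ ∧
        SatisfiesFKG ρ ∧
        ρ ({ω : Conf | ∀ x, ω x = false} ∪ GoodEvent) = 1 ∧
        0 < ρ GoodEvent ∧
        (∀ v ∈ L, (ProbabilityTheory.cond ρ GoodEvent).map (translateConf v) =
          ProbabilityTheory.cond ρ GoodEvent) := by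
  rintro ⟨ρ, hprob, hfkg, hρ, hpos, hinv⟩
  exact (setup_cond hk hprob hfkg hρ hpos fun m n => hinv _ (by
    have := hL (m, n)
    simpa using this)).contradiction
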